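/- arXiv:2310.07785 — 2 statements merged into one kernel-verified Lean document; each statement's English description precedes it below -/
import Mathlib

section
/- Let q : Y → X be a continuous, open, surjective map of topological spaces and let g : A → X be a continuous map. Form the pullback P = {p : Y × A // q p.1 = g p.2} with the subspace topology, and let pr : P → Y be the first projection. If pr is an open map, then g is an open map. (Topological analogue of Proposition: open maps of locales descend along effective descent morphisms.) -/
/-!
Openness of `g` can be tested after pulling back along `q`: the Beck–Chevalley identity writes
`q ⁻¹' (g '' U)` as the image under the first projection of an open subset of the pullback.
An open continuous surjection is a quotient map, so it detects openness of `g '' U`.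
-/

open Set Function

theorem preimage_image_eq_image_fst_preimage_snd {X Y A : Type*} (q : Y → X) (g : A → X)
    (s : Set A) :
    q ⁻¹' (g '' s) = (Pullback.fst : q.Pullback g → Y) '' (Pullback.snd ⁻¹' s) := by
  ext y
  constructor
  · rintro ⟨a, ha, hay⟩
    exact ⟨⟨(y, a), hay.symm⟩, ha, rfl⟩
  · rintro ⟨⟨⟨_, a⟩, hya⟩, ha, rfl⟩
    exact ⟨a, ha, hya.symm⟩

theorem open_descends_along_open_surjection_general
    {X Y A : Type*} [TopologicalSpace X] [TopologicalSpace Y] [TopologicalSpace A]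
    {q : Y → X} {g : A → X} (hq : ∀ s ⊆ range g, IsOpen (q ⁻¹' s) → IsOpen s)
    (h : IsOpenMap (Pullback.fst : q.Pullback g → Y)) : IsOpenMap g := by
  intro U hU
  have hU_snd : IsOpen ((Pullback.snd : q.Pullback g → A) ⁻¹' U) :=
    hU.preimage (continuous_snd.comp continuous_subtype_val)
  apply hq (g '' U) (image_subset_range g U)
  rw [preimage_image_eq_image_fst_preimage_snd]
  exact h _ hU_snd

/-- Topological analogue of "open maps descend along effective descent morphisms",
for open-surjection covers: if `q : Y → X` is a continuous open surjection,
`g : A → X` is continuous, and the pullback projection `pr : P → Y` is an open map,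
then `g` is an open map. -/
theorem open_descends_along_open_surjection
    {X Y A : Type*} [TopologicalSpace X] [TopologicalSpace Y] [TopologicalSpace A]
    (q : Y → X) (hq_cont : Continuous q) (hq_open : IsOpenMap q)
    (hq_surj : Function.Surjective q)
    (g : A → X) (hg_cont : Continuous g)
    (pr : {p : Y × A // q p.1 = g p.2} → Y)
    (hpr : pr = fun p => p.val.1)
    (h : IsOpenMap pr) : IsOpenMap g := by
  subst hpr
  exact open_descends_along_open_surjection_general
    (fun _ _ => (hq_open.isQuotientMap hq_cont hq_surj).isOpen_preimage.mp) h
end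

section
/- Let f : Y ⟶ X be a morphism in the category TopCat of topological spaces such that the underlying function of f is surjective and f is an open map. Then f is an effective descent morphism: the pullback functor Over.pullback f : Over X ⥤ Over Y is monadic. (This is the fact, used throughout the paper, that open surjections are effective descent morphisms; here in its topological form.) -/
open CategoryTheory CategoryTheory.Limits

/-!
By Beck's theorem it suffices that `f^*` reflects isomorphisms and preserves coequalizers of
`f^*`-split pairs. It reflects isomorphisms because the projections `f^* A ⟶ A` are open quotient
maps.

Let `q : B ⟶ Q` be the coequalizer of an `f^*`-split pair and `π : f^* B ⟶ Z` the split coequalizer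
of its image, with section `s`; the claim is that the comparison `k : Z ⟶ f^* Q` is invertible. For
every `U ⊆ Z` the image of `π⁻¹ U` in `B` is saturated for `q`. Taking `U` to be a point shows that
`k` is injective; taking `U` open shows that `Z ⟶ f^* Q ⟶ Q` is open. To see that `k` is open, let
`W` be a neighbourhood of `z`. Then `π⁻¹ W` contains a box `U ×_X V` around `s z`, and `k(W)`
contains every point of `f^* Q` that lies over `V` and over the image in `Q` of
`{z' | pr₁ (s z') ∈ U}`, which is a neighbourhood of `z` because `s` is continuous.
-/

open Topology

namespace OpenSurjectionDescent

universe u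

section ConcreteCategory

variable {C : Type*} [Category.{u} C] {FC : C → C → Type*} {CC : C → Type u}
  [∀ A B, FunLike (FC A B) (CC A) (CC B)] [ConcreteCategory.{u} C FC]

section Pullback

variable {A B X : C} {p : A ⟶ X} {f : B ⟶ X} [HasPullback p f]

variable (p f) in
lemma pullback_condition_apply (z : ToType (pullback p f)) :
    p (pullback.fst p f z) = f (pullback.snd p f z) := by
  rw [← ConcreteCategory.comp_apply, pullback.condition, ConcreteCategory.comp_apply]

lemma pullback_ext [PreservesLimit (cospan p f) (forget C)] {z w : ToType (pullback p f)}
    (hfst : pullback.fst p f z = pullback.fst p f w)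
    (hsnd : pullback.snd p f z = pullback.snd p f w) : z = w := by
  obtain ⟨a, b, h, rfl⟩ := Concrete.pullbackMk_surjective p f z
  obtain ⟨a', b', h', rfl⟩ := Concrete.pullbackMk_surjective p f w
  simp only [Concrete.pullbackMk_fst, Concrete.pullbackMk_snd] at hfst hsnd
  subst hfst hsnd
  rfl

end Pullback

section Over

variable {X Y : C} {A B D : Over X}

lemma over_w_apply (k : A ⟶ B) (x : ToType A.left) : B.hom (k.left x) = A.hom x := by
  rw [← ConcreteCategory.comp_apply, Over.w]

lemma left_apply_left_apply {k : A ⟶ B} {l : B ⟶ D} {m : A ⟶ D} (h : k ≫ l = m)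
    (x : ToType A.left) : l.left (k.left x) = m.left x := by
  rw [← ConcreteCategory.comp_apply, ← Over.comp_left, h]

variable {f : Y ⟶ X} [HasPullbacksAlong f]

lemma pullback_fst_map_left (k : A ⟶ B) (z : ToType ((Over.pullback f).obj A).left) :
    pullback.fst B.hom f (((Over.pullback f).map k).left z) = k.left (pullback.fst A.hom f z) := by
  have h : ((Over.pullback f).map k).left ≫ pullback.fst B.hom f =
      pullback.fst A.hom f ≫ k.left := pullback.lift_fst ..
  simpa only [ConcreteCategory.comp_apply] using ConcreteCategory.congr_hom h z

lemma pullback_snd_map_left (k : A ⟶ B) (z : ToType ((Over.pullback f).obj A).left) :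
    pullback.snd B.hom f (((Over.pullback f).map k).left z) = pullback.snd A.hom f z :=
  over_w_apply ((Over.pullback f).map k) z

lemma surjective_map_left [PreservesLimitsOfShape WalkingCospan (forget C)] {k : A ⟶ B}
    (hk : Function.Surjective k.left) :
    Function.Surjective ((Over.pullback f).map k).left := by
  intro z
  obtain ⟨x, hx⟩ := hk (pullback.fst B.hom f z)
  have hxz : A.hom x = f (pullback.snd B.hom f z) := by
    rw [← over_w_apply k, hx, pullback_condition_apply]
  refine ⟨Concrete.pullbackMk A.hom f x _ hxz, pullback_ext (p := B.hom) (f := f) ?_ ?_⟩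
  · rw [pullback_fst_map_left, Concrete.pullbackMk_fst, hx]
  · rw [pullback_snd_map_left, Concrete.pullbackMk_snd]

lemma pullback_fst_left_apply {q : A ⟶ B} {Z : Over Y} {π : (Over.pullback f).obj A ⟶ Z}
    {k : Z ⟶ (Over.pullback f).obj B} (hk : π ≫ k = (Over.pullback f).map q)
    (z : ToType ((Over.pullback f).obj A).left) :
    pullback.fst B.hom f (k.left (π.left z)) = q.left (pullback.fst A.hom f z) := by
  rw [left_apply_left_apply hk, pullback_fst_map_left]

section SplitPair

variable {Q : Over X} {a b : A ⟶ B} {q : B ⟶ Q} {w : a ≫ q = b ≫ q}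
  {Z : Over Y} {π : (Over.pullback f).obj B ⟶ Z} {k : Z ⟶ (Over.pullback f).obj Q}
  [PreservesLimitsOfShape WalkingCospan (forget C)]

lemma preimage_image_fst_subset
    (hπ : (Over.pullback f).map a ≫ π = (Over.pullback f).map b ≫ π)
    (U : Set (ToType Z.left)) :
    a.left ⁻¹' (pullback.fst B.hom f '' (π.left ⁻¹' U)) ⊆
      b.left ⁻¹' (pullback.fst B.hom f '' (π.left ⁻¹' U)) := by
  rintro x ⟨z, hz, hzx⟩
  have hx : A.hom x = f (pullback.snd B.hom f z) := by
    rw [← over_w_apply a, ← hzx, pullback_condition_apply]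
  let y : ToType ((Over.pullback f).obj A).left := Concrete.pullbackMk A.hom f x _ hx
  have hy : pullback.fst A.hom f y = x := Concrete.pullbackMk_fst ..
  have hyz : ((Over.pullback f).map a).left y = z := pullback_ext (p := B.hom) (f := f)
    (by rw [pullback_fst_map_left, hy, hzx])
    (by rw [pullback_snd_map_left, Concrete.pullbackMk_snd])
  have hπy : π.left (((Over.pullback f).map b).left y) = π.left z := by
    rw [left_apply_left_apply hπ.symm, ← left_apply_left_apply rfl, hyz]
  exact ⟨((Over.pullback f).map b).left y, Set.mem_preimage.2 (hπy ▸ hz),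
    by rw [pullback_fst_map_left, hy]⟩

variable [PreservesColimit (parallelPair a b) (Over.forget X ⋙ forget C)]

lemma preimage_image_image_fst (hq : IsColimit (Cofork.ofπ q w))
    (hπ : (Over.pullback f).map a ≫ π = (Over.pullback f).map b ≫ π)
    (U : Set (ToType Z.left)) :
    q.left ⁻¹' (q.left '' (pullback.fst B.hom f '' (π.left ⁻¹' U))) =
      pullback.fst B.hom f '' (π.left ⁻¹' U) :=
  Types.coequalizer_preimage_image_eq_of_preimage_eq _ _ _ _
    (isColimitCoforkMapOfIsColimit (Over.forget X ⋙ forget C) w hq) _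
    ((preimage_image_fst_subset hπ U).antisymm (preimage_image_fst_subset hπ.symm U))

lemma injective_left_of_comp_eq (hq : IsColimit (Cofork.ofπ q w))
    (hπ : (Over.pullback f).map a ≫ π = (Over.pullback f).map b ≫ π)
    (hπ_surj : Function.Surjective π.left) (hk : π ≫ k = (Over.pullback f).map q) :
    Function.Injective k.left := by
  rw [Function.Injective, hπ_surj.forall₂]
  intro v v' hvv'
  have hfst : q.left (pullback.fst B.hom f v) = q.left (pullback.fst B.hom f v') := by
    rw [← pullback_fst_left_apply hk, hvv', pullback_fst_left_apply hk]
  have hsnd : pullback.snd B.hom f v = pullback.snd B.hom f v' := by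
    rw [left_apply_left_apply hk, left_apply_left_apply hk] at hvv'
    rw [← pullback_snd_map_left q, hvv', pullback_snd_map_left]
  have hv' : pullback.fst B.hom f v' ∈ pullback.fst B.hom f '' (π.left ⁻¹' {π.left v}) := by
    rw [← preimage_image_image_fst hq hπ]
    exact ⟨_, ⟨v, rfl, rfl⟩, hfst⟩
  obtain ⟨u, hu, huv'⟩ := hv'
  have husnd : pullback.snd B.hom f u = pullback.snd B.hom f v := by
    have := congrArg Z.hom hu
    rwa [over_w_apply π, over_w_apply π] at this
  rw [← pullback_ext huv' (husnd.trans hsnd)]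
  exact hu.symm

end SplitPair

end Over

end ConcreteCategory

section Pullback

variable {A B X : TopCat.{u}} (p : A ⟶ X) (f : B ⟶ X)

lemma nhds_pullback (z : (pullback p f : TopCat.{u})) :
    𝓝 z = (𝓝 (pullback.fst p f z)).comap (pullback.fst p f) ⊓
      (𝓝 (pullback.snd p f z)).comap (pullback.snd p f) := by
  rw [← nhds_induced, ← nhds_induced, ← nhds_inf, ← TopCat.pullback_topology]

lemma mem_nhds_pullback_iff {z : (pullback p f : TopCat.{u})}
    {W : Set (pullback p f : TopCat.{u})} :
    W ∈ 𝓝 z ↔ ∃ U ∈ 𝓝 (pullback.fst p f z), ∃ V ∈ 𝓝 (pullback.snd p f z),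
      ∀ w, pullback.fst p f w ∈ U → pullback.snd p f w ∈ V → w ∈ W := by
  rw [nhds_pullback]
  simp only [Filter.mem_inf_iff_superset, Filter.mem_comap]
  constructor
  · rintro ⟨_, ⟨U, hU, hUW⟩, _, ⟨V, hV, hVW⟩, hW⟩
    exact ⟨U, hU, V, hV, fun w hwU hwV ↦ hW ⟨hUW hwU, hVW hwV⟩⟩
  · rintro ⟨U, hU, V, hV, hW⟩
    exact ⟨_, ⟨U, hU, subset_rfl⟩, _, ⟨V, hV, subset_rfl⟩, fun w hw ↦ hW w hw.1 hw.2⟩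

variable {f}

lemma isOpenMap_pullback_fst (hf : IsOpenMap f) : IsOpenMap (pullback.fst p f) := by
  refine .of_nhds_le fun z ↦ Filter.le_map fun W hW ↦ ?_
  obtain ⟨U, hU, V, hV, hUV⟩ := (mem_nhds_pullback_iff p f).1 hW
  have hfV : f '' V ∈ 𝓝 (p (pullback.fst p f z)) :=
    pullback_condition_apply p f z ▸ hf.image_mem_nhds hV
  filter_upwards [hU, p.hom.continuous.continuousAt hfV]
  rintro a ha ⟨b, hb, hba⟩
  exact ⟨Concrete.pullbackMk p f a b hba.symm, hUV _ (by simpa) (by simpa), by simp⟩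

lemma isOpenQuotientMap_pullback_fst (hf : IsOpenQuotientMap f) :
    IsOpenQuotientMap (pullback.fst p f) where
  surjective a :=
    have ⟨b, hb⟩ := hf.surjective (p a)
    ⟨Concrete.pullbackMk p f a b hb.symm, Concrete.pullbackMk_fst ..⟩
  continuous := (pullback.fst p f).hom.continuous
  isOpenMap := isOpenMap_pullback_fst p hf.isOpenMap

end Pullback

variable {X Y : TopCat.{u}} {f : Y ⟶ X}

lemma isIso_of_bijective_of_isOpenMap {A B : Over X} (k : A ⟶ B) (hk : Function.Bijective k.left)
    (hopen : IsOpenMap k.left) : IsIso k :=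
  have : IsIso ((Over.forget X).map k) := TopCat.isIso_of_bijective_of_isOpenMap k.left hk hopen
  isIso_of_reflects_iso k (Over.forget X)

lemma reflectsIsomorphisms_pullback (hf : IsOpenQuotientMap f) :
    (Over.pullback f).ReflectsIsomorphisms where
  reflects {A B} k _ := by
    have hfst (C : Over X) := isOpenQuotientMap_pullback_fst C.hom hf
    have : ∀ C (g : C ⟶ X), Epi (pullback.fst g f) := fun C g ↦
      (TopCat.epi_iff_surjective _).2 (isOpenQuotientMap_pullback_fst g hf).surjective
    have : Mono k := (Over.pullback f).mono_of_mono_map inferInstance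
    have hmap : IsHomeomorph ((Over.pullback f).map k).left :=
      (TopCat.isIso_iff_isHomeomorph _).1
        (inferInstanceAs (IsIso ((Over.forget Y).map ((Over.pullback f).map k))))
    have hsq : pullback.fst B.hom f ∘ ((Over.pullback f).map k).left =
        k.left ∘ pullback.fst A.hom f := funext (pullback_fst_map_left k)
    have hk : IsOpenQuotientMap k.left := .of_comp (hfst A).continuous (hfst A).surjective
      k.left.hom.continuous (hsq ▸ (hfst B).comp ⟨hmap.surjective, hmap.continuous, hmap.isOpenMap⟩)
    exact isIso_of_bijective_of_isOpenMap k
      ⟨(TopCat.mono_iff_injective _).1 inferInstance, hk.surjective⟩ hk.isOpenMap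

section SplitPair

variable {A B Q : Over X} {a b : A ⟶ B} {q : B ⟶ Q} {w : a ≫ q = b ≫ q}
  {Z : Over Y} {π : (Over.pullback f).obj B ⟶ Z} {k : Z ⟶ (Over.pullback f).obj Q}

lemma isOpenMap_pullback_fst_comp_left (hopen : IsOpenMap f) (hq : IsColimit (Cofork.ofπ q w))
    (hπ : (Over.pullback f).map a ≫ π = (Over.pullback f).map b ≫ π)
    (hπ_surj : Function.Surjective π.left) (hk : π ≫ k = (Over.pullback f).map q) :
    IsOpenMap (pullback.fst Q.hom f ∘ k.left) := by
  intro U hU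
  have hq_quot : IsQuotientMap q.left := TopCat.isQuotientMap_of_isColimit_cofork _
    (isColimitCoforkMapOfIsColimit (Over.forget X) w hq)
  have hcomp : (pullback.fst Q.hom f ∘ k.left) ∘ π.left = q.left ∘ pullback.fst B.hom f :=
    funext (pullback_fst_left_apply hk)
  have himage : pullback.fst Q.hom f ∘ k.left '' U =
      q.left '' (pullback.fst B.hom f '' (π.left ⁻¹' U)) := by
    rw [← Set.image_comp q.left, ← hcomp, Set.image_comp _ π.left, Set.image_preimage_eq U hπ_surj]
  rw [himage, ← hq_quot.isOpen_preimage, preimage_image_image_fst hq hπ]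
  exact isOpenMap_pullback_fst B.hom hopen _ (hU.preimage π.left.hom.continuous)

lemma isOpenMap_left_of_isOpenMap_pullback_fst_comp {s : Z ⟶ (Over.pullback f).obj B}
    (hs : s ≫ π = 𝟙 Z) (hk : π ≫ k = (Over.pullback f).map q)
    (hk_fst : IsOpenMap (pullback.fst Q.hom f ∘ k.left)) : IsOpenMap k.left := by
  have hπs (z : Z.left) : π.left (s.left z) = z := left_apply_left_apply hs z
  have hfst (z : Z.left) :
      q.left (pullback.fst B.hom f (s.left z)) = pullback.fst Q.hom f (k.left z) := by
    rw [← pullback_fst_left_apply hk, hπs]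
  have hsnd (z : Z.left) : pullback.snd B.hom f (s.left z) = pullback.snd Q.hom f (k.left z) :=
    (over_w_apply s z).trans (over_w_apply k z).symm
  refine .of_nhds_le fun z ↦ Filter.le_map fun W hW ↦ ?_
  have hπW : π.left ⁻¹' W ∈ 𝓝 (s.left z) :=
    π.left.hom.continuous.continuousAt ((hπs z).symm ▸ hW)
  obtain ⟨U, hU, V, hV, hUV⟩ := (mem_nhds_pullback_iff B.hom f).1 hπW
  have hsU : s.left ⁻¹' (pullback.fst B.hom f ⁻¹' U) ∈ 𝓝 z :=
    (s.left ≫ pullback.fst B.hom f).hom.continuous.continuousAt hU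
  refine (mem_nhds_pullback_iff Q.hom f).2
    ⟨_, hk_fst.image_mem_nhds hsU, V, hsnd z ▸ hV, ?_⟩
  rintro v ⟨z', hz'U, hz'v⟩ hvV
  replace hz'v : q.left (pullback.fst B.hom f (s.left z')) = pullback.fst Q.hom f v :=
    (hfst z').trans hz'v
  have hv : B.hom (pullback.fst B.hom f (s.left z')) = f (pullback.snd Q.hom f v) := by
    rw [← over_w_apply q, hz'v, pullback_condition_apply]
  let x : ((Over.pullback f).obj B).left := Concrete.pullbackMk B.hom f _ _ hv
  have hx_fst : pullback.fst B.hom f x = _ := Concrete.pullbackMk_fst ..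
  have hx_snd : pullback.snd B.hom f x = _ := Concrete.pullbackMk_snd ..
  refine ⟨π.left x, hUV x (hx_fst ▸ hz'U) (hx_snd ▸ hvV), ?_⟩
  rw [left_apply_left_apply hk]
  exact pullback_ext (by rw [pullback_fst_map_left, hx_fst, hz'v])
    (by rw [pullback_snd_map_left, hx_snd])

lemma isIso_of_comp_eq_map (hopen : IsOpenMap f) (hq : IsColimit (Cofork.ofπ q w))
    (hπ : (Over.pullback f).map a ≫ π = (Over.pullback f).map b ≫ π)
    {s : Z ⟶ (Over.pullback f).obj B} (hs : s ≫ π = 𝟙 Z)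
    (hk : π ≫ k = (Over.pullback f).map q) : IsIso k := by
  have hπ_surj : Function.Surjective π.left := fun z ↦
    ⟨s.left z, left_apply_left_apply hs z⟩
  have hq_surj : Function.Surjective q.left := (TopCat.epi_iff_surjective _).1 <|
    epi_of_isColimit_cofork (isColimitCoforkMapOfIsColimit (Over.forget X) w hq)
  have hk_surj : Function.Surjective k.left := .of_comp (g := π.left) <| by
    simpa only [Function.comp_def, left_apply_left_apply hk] using surjective_map_left hq_surj
  exact isIso_of_bijective_of_isOpenMap k
    ⟨injective_left_of_comp_eq hq hπ hπ_surj hk, hk_surj⟩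
    (isOpenMap_left_of_isOpenMap_pullback_fst_comp hs hk
      (isOpenMap_pullback_fst_comp_left hopen hq hπ hπ_surj hk))

end SplitPair

lemma preservesColimitOfIsSplitPair_pullback (hopen : IsOpenMap f) :
    Monad.PreservesColimitOfIsSplitPair (Over.pullback f) where
  out {A B} a b _ := by
    obtain ⟨Z, π, ⟨t⟩⟩ := HasSplitCoequalizer.splittable
      (f := (Over.pullback f).map a) (g := (Over.pullback f).map b)
    let q := coequalizer.π a b
    have w : a ≫ q = b ≫ q := coequalizer.condition a b
    have hq := coequalizerIsCoequalizer a b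
    obtain ⟨k, hk⟩ := Cofork.IsColimit.desc' t.isCoequalizer ((Over.pullback f).map q)
      (by rw [← Functor.map_comp, ← Functor.map_comp, w])
    have : IsIso k := isIso_of_comp_eq_map hopen hq t.condition t.rightSection_π hk
    exact preservesColimit_of_preserves_colimit_cocone hq <|
      (isColimitMapCoconeCoforkEquiv (Over.pullback f) w).symm <|
      t.isCoequalizer.ofIsoColimit (Cofork.ext (asIso k) hk)

end OpenSurjectionDescent

/-- Open surjections of topological spaces are effective descent morphisms:
the pullback functor `Over X ⥤ Over Y` is monadic. -/
theorem openSurjection_effectiveDescent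
    {Y X : TopCat} (f : Y ⟶ X)
    (hsurj : Function.Surjective f) (hopen : IsOpenMap f) :
    Nonempty (MonadicRightAdjoint (Over.pullback f)) := by
  have := OpenSurjectionDescent.reflectsIsomorphisms_pullback ⟨hsurj, f.hom.continuous, hopen⟩
  have := OpenSurjectionDescent.preservesColimitOfIsSplitPair_pullback hopen
  have : Monad.HasCoequalizerOfIsSplitPair (Over.pullback f) := ⟨fun _ _ ↦ inferInstance⟩
  exact ⟨Monad.monadicOfHasPreservesGSplitCoequalizersOfReflectsIsomorphisms
    (Over.mapPullbackAdj f)⟩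
end
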